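/- Let d ≥ 1, Δ > 0 and λ₁ ∈ (0,1). Then P₀ is absolutely continuous with respect to Q₀ and the Kullback–Leibler divergence satisfies KL(P₀ ‖ Q₀) = λ₁·log(λ₁(1+Δ)^d) + (1−λ₁)·log( (1−λ₁)(1+Δ)^d / ((1+Δ)^d − 1) ). -/

import Mathlib

open MeasureTheory ProbabilityTheory
open scoped ENNReal

noncomputable section

/-- The closed annulus `{x : a ≤ ‖x‖ ≤ b}` in `ℝ^d` (Euclidean norm). -/
def annulus (d : ℕ) (a b : ℝ) : Set (EuclideanSpace ℝ (Fin d)) :=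
  {x | a ≤ ‖x‖ ∧ ‖x‖ ≤ b}

/-- The uniform probability measure on the annulus `A_d(a,b)`:
Lebesgue measure restricted to the annulus and normalized. -/
def U (d : ℕ) (a b : ℝ) : Measure (EuclideanSpace ℝ (Fin d)) :=
  (volume (annulus d a b))⁻¹ • volume.restrict (annulus d a b)

/-- `C_d`, the Lebesgue volume of the unit ball in `ℝ^d`. -/
def Cd (d : ℕ) : ℝ :=
  (volume (Metric.closedBall (0 : EuclideanSpace ℝ (Fin d)) 1)).toReal

open Classical in
/-- Kullback–Leibler divergence: `∫ log (dμ/dν) dμ` if `μ ≪ ν`, and `+∞` otherwise. -/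
def klDiv {X : Type*} [MeasurableSpace X] (μ ν : Measure X) : EReal :=
  if μ ≪ ν then ((∫ x, Real.log (μ.rnDeriv ν x).toReal ∂μ : ℝ) : EReal) else ⊤

/-- `P₀ = λ₁·U_d(0,1) + (1−λ₁)·U_d(1,1+Δ)`. -/
def P0 (d : ℕ) (Δ l1 : ℝ) : Measure (EuclideanSpace ℝ (Fin d)) :=
  ENNReal.ofReal l1 • U d 0 1 + ENNReal.ofReal (1 - l1) • U d 1 (1 + Δ)

/-- `P₁ = λ₂·U_d(0,1) + (1−λ₂)·U_d(2,3)`. -/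
def P1 (d : ℕ) (l2 : ℝ) : Measure (EuclideanSpace ℝ (Fin d)) :=
  ENNReal.ofReal l2 • U d 0 1 + ENNReal.ofReal (1 - l2) • U d 2 3

/-- `Q₀ = U_d(0,1+Δ)`. -/
def Q0 (d : ℕ) (Δ : ℝ) : Measure (EuclideanSpace ℝ (Fin d)) :=
  U d 0 (1 + Δ)

/-- Joint measure on `ℝ^d × {0,1}` with uniform class prior. -/
def joint (d : ℕ) (μ0 μ1 : Measure (EuclideanSpace ℝ (Fin d))) :
    Measure (EuclideanSpace ℝ (Fin d) × Fin 2) :=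
  (1/2 : ℝ≥0∞) • μ0.map (fun x => (x, 0)) + (1/2 : ℝ≥0∞) • μ1.map (fun x => (x, 1))

/-- Real-valued density of `μ` with respect to Lebesgue measure. -/
def f (d : ℕ) (μ : Measure (EuclideanSpace ℝ (Fin d))) (x : EuclideanSpace ℝ (Fin d)) : ℝ :=
  (μ.rnDeriv volume x).toReal

/-!
Conditioning `Q₀` on a concentric sub-annulus gives the uniform measure on that annulus, so `P₀`
reweights the restrictions of `Q₀` to finitely many almost disjoint shells. Such a reweighting
`∑ i, wᵢ ν[|Aᵢ]` has the constant density `wᵢ / ν(Aᵢ)` on each `Aᵢ`, whence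
`KL = ∑ i, wᵢ log (wᵢ / ν(Aᵢ))`; and the mass of a shell under `Q₀` is a quotient of differences of
`d`-th powers of radii.
-/

section WeightedSum

open scoped Function

variable {X ι : Type*} [MeasurableSpace X] [Fintype ι] {ν : Measure X} {A : ι → Set X}

theorem sum_smul_cond_absolutelyContinuous (c : ι → ℝ≥0∞) : ∑ i, c i • ν[|A i] ≪ ν :=
  Measure.sum_fintype (fun i => c i • ν[|A i]) ▸ Measure.absolutelyContinuous_sum_left fun _ =>
    Measure.smul_absolutelyContinuous.trans cond_absolutelyContinuous

theorem sum_smul_cond_eq_withDensity (hA : ∀ i, MeasurableSet (A i)) (c : ι → ℝ≥0∞) :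
    ∑ i, c i • ν[|A i] = ν.withDensity (∑ i, (A i).indicator fun _ => c i / ν (A i)) := by
  rw [← tsum_fintype (L := .unconditional ι) fun i => (A i).indicator fun _ => c i / ν (A i),
    withDensity_tsum fun i => measurable_const.indicator (hA i), Measure.sum_fintype]
  refine Finset.sum_congr rfl fun i _ => ?_
  rw [withDensity_indicator (hA i), withDensity_const, ProbabilityTheory.cond, smul_smul,
    div_eq_mul_inv]

theorem sum_indicator_const_ae_eq_cond {M : Type*} [AddCommMonoid M]
    (hA : ∀ i, MeasurableSet (A i)) (hdisj : Pairwise (AEDisjoint ν on A)) (a : ι → M) (i : ι) :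
    (∑ j, (A j).indicator fun _ => a j) =ᵐ[ν[|A i]] fun _ => a i := by
  have hnotMem : ∀ᵐ x ∂ν[|A i], ∀ j, i ≠ j → x ∉ A i ∩ A j :=
    cond_absolutelyContinuous.ae_le <| ae_all_iff.2 fun j =>
      Filter.eventually_imp_distrib_left.2 fun hij => measure_eq_zero_iff_ae_notMem.1 (hdisj hij)
  filter_upwards [hnotMem, ae_cond_mem (hA i)] with x hx hxi
  rw [Finset.sum_apply, Fintype.sum_eq_single i fun j hji =>
    Set.indicator_of_notMem (fun hxj => hx j hji.symm ⟨hxi, hxj⟩) _, Set.indicator_of_mem hxi]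

theorem rnDeriv_sum_smul_cond_ae_eq [SigmaFinite ν] (hA : ∀ i, MeasurableSet (A i))
    (hdisj : Pairwise (AEDisjoint ν on A)) (c : ι → ℝ≥0∞) (i : ι) :
    (∑ j, c j • ν[|A j]).rnDeriv ν =ᵐ[ν[|A i]] fun _ => c i / ν (A i) := by
  rw [sum_smul_cond_eq_withDensity hA]
  have hmeas : Measurable (∑ j, (A j).indicator fun _ => c j / ν (A j)) := by
    rw [Finset.sum_fn]
    exact Finset.measurable_sum _ fun j _ => measurable_const.indicator (hA j)
  exact (cond_absolutelyContinuous.ae_eq (Measure.rnDeriv_withDensity ν hmeas)).trans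
    (sum_indicator_const_ae_eq_cond hA hdisj _ i)

-- A vanishing weight contributes `0 * log 0 = 0`, the usual convention for divergences.
theorem klDiv_sum_smul_cond [SigmaFinite ν] (hA : ∀ i, MeasurableSet (A i))
    (hdisj : Pairwise (AEDisjoint ν on A)) (hne_zero : ∀ i, ν (A i) ≠ 0)
    (hne_top : ∀ i, ν (A i) ≠ ∞) {w : ι → ℝ} (hw : ∀ i, 0 ≤ w i) :
    klDiv (∑ i, ENNReal.ofReal (w i) • ν[|A i]) ν =
      ((∑ i, w i * Real.log (w i / ν.real (A i)) : ℝ) : EReal) := by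
  set P := ∑ i, ENNReal.ofReal (w i) • ν[|A i] with hP
  have hlog (i : ι) : (fun x => Real.log (P.rnDeriv ν x).toReal) =ᵐ[ν[|A i]]
      fun _ => Real.log (w i / ν.real (A i)) := by
    filter_upwards [rnDeriv_sum_smul_cond_ae_eq hA hdisj _ i] with x hx
    rw [hx, ENNReal.toReal_div, ENNReal.toReal_ofReal (hw i), measureReal_def]
  have hint (i : ι) : Integrable (fun x => Real.log (P.rnDeriv ν x).toReal) ν[|A i] :=
    (integrable_const _).congr (hlog i).symm
  rw [klDiv, if_pos (sum_smul_cond_absolutelyContinuous _), EReal.coe_eq_coe_iff]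
  calc ∫ x, Real.log (P.rnDeriv ν x).toReal ∂P
      = ∑ i, w i * ∫ x, Real.log (P.rnDeriv ν x).toReal ∂ν[|A i] := by
        conv_lhs => rw [hP]
        rw [integral_finsetSum_measure fun i _ => (hint i).smul_measure ENNReal.ofReal_ne_top]
        simp only [integral_smul_measure, ENNReal.toReal_ofReal (hw _), smul_eq_mul]
    _ = ∑ i, w i * Real.log (w i / ν.real (A i)) := by
        refine Finset.sum_congr rfl fun i _ => ?_
        have := cond_isProbabilityMeasure_of_finite (hne_zero i) (hne_top i)
        rw [integral_congr_ae (hlog i), integral_const, probReal_univ, one_smul]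

end WeightedSum

section Annulus

open scoped Function

variable {d : ℕ} {a b a' b' : ℝ}

theorem annulus_eq_closedBall_sdiff_ball :
    annulus d a b = Metric.closedBall 0 b \ Metric.ball 0 a := by
  ext x
  simp [annulus, and_comm]

theorem measurableSet_annulus : MeasurableSet (annulus d a b) :=
  annulus_eq_closedBall_sdiff_ball ▸ measurableSet_closedBall.diff measurableSet_ball

theorem annulus_subset_annulus (ha : a ≤ a') (hb : b' ≤ b) : annulus d a' b' ⊆ annulus d a b :=
  fun _ hx => ⟨ha.trans hx.1, hx.2.trans hb⟩

theorem volume_annulus_ne_top : volume (annulus d a b) ≠ ∞ :=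
  measure_ne_top_of_subset (annulus_eq_closedBall_sdiff_ball.trans_subset Set.sdiff_subset)
    measure_closedBall_lt_top.ne

theorem aedisjoint_annulus [NeZero d] (hb : b ≤ a') :
    AEDisjoint volume (annulus d a b) (annulus d a' b') :=
  measure_mono_null
    (fun _ hx => mem_sphere_zero_iff_norm.2 (le_antisymm hx.1.2 (hb.trans hx.2.1)))
    (Measure.addHaar_sphere volume 0 b)

theorem pairwise_aedisjoint_annulus [NeZero d] {n : ℕ} {ρ : Fin (n + 1) → ℝ} (hρ : Monotone ρ) :
    Pairwise (AEDisjoint volume on fun i : Fin n => annulus d (ρ i.castSucc) (ρ i.succ)) := by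
  have hlt {i j : Fin n} (hij : i < j) : AEDisjoint volume
      (annulus d (ρ i.castSucc) (ρ i.succ)) (annulus d (ρ j.castSucc) (ρ j.succ)) :=
    aedisjoint_annulus (hρ (Fin.succ_le_castSucc_iff.2 hij))
  exact fun i j hij => hij.lt_or_gt.elim hlt fun hji => (hlt hji).symm

theorem Cd_pos : 0 < Cd d :=
  ENNReal.toReal_pos (Metric.measure_closedBall_pos volume _ one_pos).ne'
    measure_closedBall_lt_top.ne

theorem volume_real_closedBall {r : ℝ} (hr : 0 ≤ r) :
    volume.real (Metric.closedBall (0 : EuclideanSpace ℝ (Fin d)) r) = r ^ d * Cd d := by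
  rw [Measure.addHaar_real_closedBall' _ _ hr, finrank_euclideanSpace_fin, Cd, measureReal_def]

theorem volume_real_annulus [NeZero d] (ha : 0 ≤ a) (hab : a ≤ b) :
    volume.real (annulus d a b) = (b ^ d - a ^ d) * Cd d := by
  rw [annulus_eq_closedBall_sdiff_ball, measureReal_sdiff
    (Metric.ball_subset_closedBall.trans (Metric.closedBall_subset_closedBall hab))
    measurableSet_ball measure_closedBall_lt_top.ne,
    ← Measure.addHaar_real_closedBall_eq_addHaar_real_ball, volume_real_closedBall ha,
    volume_real_closedBall (ha.trans hab), sub_mul]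

theorem volume_annulus_ne_zero [NeZero d] (ha : 0 ≤ a) (hab : a < b) :
    volume (annulus d a b) ≠ 0 := by
  rw [← measureReal_ne_zero_iff volume_annulus_ne_top, volume_real_annulus ha hab.le]
  exact (mul_pos (sub_pos.2 (pow_lt_pow_left₀ hab ha (NeZero.ne d))) Cd_pos).ne'

end Annulus

section Uniform

variable {d : ℕ} {a b a' b' : ℝ}

theorem U_eq_cond : U d a b = volume[|annulus d a b] := rfl

instance : IsZeroOrProbabilityMeasure (U d a b) :=
  inferInstanceAs (IsZeroOrProbabilityMeasure volume[|annulus d a b])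

theorem cond_U_annulus (ha : a ≤ a') (hb : b' ≤ b) :
    (U d a b)[|annulus d a' b'] = U d a' b' := by
  simp only [U_eq_cond]
  rw [cond_cond_eq_cond_inter' measurableSet_annulus measurableSet_annulus volume_annulus_ne_top,
    Set.inter_eq_right.2 (annulus_subset_annulus ha hb)]

theorem U_real_annulus [NeZero d] (ha₀ : 0 ≤ a) (ha : a ≤ a') (hab' : a' ≤ b') (hb : b' ≤ b) :
    (U d a b).real (annulus d a' b') = (b' ^ d - a' ^ d) / (b ^ d - a ^ d) := by
  rw [U_eq_cond, measureReal_def, cond_apply measurableSet_annulus, ENNReal.toReal_mul,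
    ENNReal.toReal_inv, ← measureReal_def, ← measureReal_def,
    Set.inter_eq_right.2 (annulus_subset_annulus ha hb),
    volume_real_annulus ha₀ (ha.trans (hab'.trans hb)), volume_real_annulus (ha₀.trans ha) hab',
    inv_mul_eq_div, mul_div_mul_right _ _ Cd_pos.ne']

theorem U_annulus_ne_zero [NeZero d] (ha₀ : 0 ≤ a') (ha : a ≤ a') (hab' : a' < b') (hb : b' ≤ b) :
    U d a b (annulus d a' b') ≠ 0 := by
  rw [U_eq_cond, cond_apply measurableSet_annulus,
    Set.inter_eq_right.2 (annulus_subset_annulus ha hb)]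
  exact mul_ne_zero (ENNReal.inv_ne_zero.2 volume_annulus_ne_top) (volume_annulus_ne_zero ha₀ hab')

end Uniform

theorem stmt3_general {d n : ℕ} [NeZero d] {ρ : Fin (n + 1) → ℝ} (hρ₀ : 0 ≤ ρ 0)
    (hρ : StrictMono ρ) {w : Fin n → ℝ} (hw : ∀ i, 0 ≤ w i) :
    let P := ∑ i, ENNReal.ofReal (w i) • U d (ρ i.castSucc) (ρ i.succ)
    let Q := U d (ρ 0) (ρ (Fin.last n))
    P ≪ Q ∧ klDiv P Q = ((∑ i, w i * Real.log (w i * (ρ (Fin.last n) ^ d - ρ 0 ^ d) /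
      (ρ i.succ ^ d - ρ i.castSucc ^ d)) : ℝ) : EReal) := by
  intro P Q
  let A (i : Fin n) : Set (EuclideanSpace ℝ (Fin d)) := annulus d (ρ i.castSucc) (ρ i.succ)
  have hρ_nonneg (i : Fin (n + 1)) : 0 ≤ ρ i := hρ₀.trans (hρ.monotone i.zero_le)
  have hρ_lt (i : Fin n) : ρ i.castSucc < ρ i.succ := hρ i.castSucc_lt_succ
  have hρ_zero_le (i : Fin n) : ρ 0 ≤ ρ i.castSucc := hρ.monotone (Fin.zero_le _)
  have hρ_le_last (i : Fin n) : ρ i.succ ≤ ρ (Fin.last n) := hρ.monotone (Fin.le_last _)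
  have hA (i : Fin n) : MeasurableSet (A i) := measurableSet_annulus
  have hP : P = ∑ i, ENNReal.ofReal (w i) • Q[|A i] := by
    simp only [P, Q, A, cond_U_annulus (hρ_zero_le _) (hρ_le_last _)]
  have hQ_real (i : Fin n) : Q.real (A i) =
      (ρ i.succ ^ d - ρ i.castSucc ^ d) / (ρ (Fin.last n) ^ d - ρ 0 ^ d) :=
    U_real_annulus hρ₀ (hρ_zero_le i) (hρ_lt i).le (hρ_le_last i)
  have hQ_ne_zero (i : Fin n) : Q (A i) ≠ 0 :=
    U_annulus_ne_zero (hρ_nonneg _) (hρ_zero_le i) (hρ_lt i) (hρ_le_last i)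
  have hdisj : Pairwise (Function.onFun (AEDisjoint Q) A) := fun i j hij =>
    cond_absolutelyContinuous (pairwise_aedisjoint_annulus hρ.monotone hij)
  refine ⟨hP ▸ sum_smul_cond_absolutelyContinuous _, ?_⟩
  rw [hP, klDiv_sum_smul_cond hA hdisj hQ_ne_zero (fun i => measure_ne_top Q (A i)) hw]
  simp only [hQ_real, div_div_eq_mul_div]

/-- `P₀ ≪ Q₀` and the value of `KL(P₀ ‖ Q₀)`. -/
theorem stmt3 (d : ℕ) (hd : 1 ≤ d) (Δ l1 : ℝ) (hΔ : 0 < Δ)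
    (hl1 : l1 ∈ Set.Ioo (0:ℝ) 1) :
    P0 d Δ l1 ≪ Q0 d Δ ∧
    klDiv (P0 d Δ l1) (Q0 d Δ) =
      ((l1 * Real.log (l1 * (1 + Δ) ^ d) +
        (1 - l1) * Real.log ((1 - l1) * (1 + Δ) ^ d / ((1 + Δ) ^ d - 1)) : ℝ) : EReal) := by
  have : NeZero d := ⟨Nat.one_le_iff_ne_zero.1 hd⟩
  have hρ : StrictMono ![0, 1, 1 + Δ] := by
    simp [Fin.strictMono_iff_lt_succ, Fin.forall_fin_two, hΔ]
  have hw : ∀ i, 0 ≤ ![l1, 1 - l1] i := by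
    simp [Fin.forall_fin_two, hl1.1.le, hl1.2.le]
  simpa [P0, Q0, Fin.sum_univ_two, NeZero.ne d] using stmt3_general (d := d) le_rfl hρ hw
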